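/- For every integers m ≥ 0 and n ≥ 0 there exists C_{m,n} > 0 such that for all k > 0 and all x with kx ≥ 1, |(d/dx)^m [e^{-ikx} H_n^{(1)}(kx)]| ≤ C_{m,n} (kx)^{-1/2} x^{-m}. -/

import Mathlib

/-!
Stripped of the phase `e^{iz}`, the Hankel function is a constant multiple of the amplitude
`(2/(πz))^{1/2} ∫_0^∞ e^{-u} u^a (1 + iu/(2z))^a du` with `a = n - 1/2`. The amplitude makes sense
for complex `z` in the sector `|Im z| < Re z`: there `1 + iu/(2z)` stays away from zero and from the
negative axis, so away from the origin the integrand is holomorphic with an integrable majorant, and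
the amplitude is holomorphic and `O(|z|^{-1/2})`. A disc of radius `t/4` about a real `t` stays in
the sector, so Cauchy's estimate makes each derivative gain a factor `t⁻¹`.
-/

open MeasureTheory
open MeasureTheory

/-- The Hankel function of the first kind of order `n`, for positive real
argument, via Watson's contour integral representation
`H_n^{(1)}(z) = (2/(πz))^{1/2} e^{i(z - nπ/2 - π/4)} / Γ(n-1/2)
  · ∫_0^∞ e^{-u} u^{n-1/2} (1 + iu/(2z))^{n-1/2} du`. -/
noncomputable def hankelH1 (n : ℕ) (z : ℝ) : ℂ :=
  ((2 : ℂ) / ((Real.pi : ℂ) * (z : ℂ))) ^ ((1:ℂ)/2) *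
    Complex.exp (Complex.I * ((z : ℂ) - (n : ℂ) * (Real.pi : ℂ) / 2 - (Real.pi : ℂ) / 4)) /
    Complex.Gamma ((n : ℂ) - 1/2) *
    ∫ u in Set.Ioi (0:ℝ),
      Complex.exp (-(u : ℂ)) * (u : ℂ) ^ ((n : ℂ) - 1/2) *
        (1 + Complex.I * (u : ℂ) / (2 * (z : ℂ))) ^ ((n : ℂ) - 1/2)

open Set Filter Topology

section Calculus

lemma rpow_le_rpow_abs_of_inv_le {t M : ℝ} (ht : 0 < t) (hinv : t⁻¹ ≤ M) (hle : t ≤ M) (s : ℝ) :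
    t ^ s ≤ M ^ |s| := by
  rcases le_total 0 s with hs | hs
  · rw [abs_of_nonneg hs]
    exact Real.rpow_le_rpow ht.le hle hs
  · rw [abs_of_nonpos hs, ← inv_inv t, Real.inv_rpow (inv_nonneg.2 ht.le),
      ← Real.rpow_neg (inv_nonneg.2 ht.le)]
    exact Real.rpow_le_rpow (inv_nonneg.2 ht.le) hinv (neg_nonneg.2 hs)

lemma integrableOn_exp_neg_mul_rpow_mul_pow {s : ℝ} (hs : -1 < s) (c d : ℝ) (N : ℕ) :
    IntegrableOn (fun u : ℝ => Real.exp (-u) * u ^ s * (c + d * u) ^ N) (Ioi 0) := by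
  induction N generalizing s with
  | zero => simpa using Real.GammaIntegral_convergent (s := s + 1) (by linarith)
  | succ N ih =>
    refine IntegrableOn.congr_fun
      (((ih hs).const_mul c).add ((ih (s := s + 1) (by linarith)).const_mul d))
      (fun u hu => ?_) measurableSet_Ioi
    simp only [Pi.add_apply, Real.rpow_add_one (ne_of_gt hu)]
    ring

lemma iteratedDeriv_comp_mul_left {𝕜 E : Type*} [NontriviallyNormedField 𝕜]
    [NormedAddCommGroup E] [NormedSpace 𝕜 E] (m : ℕ) (f : 𝕜 → E) (k x : 𝕜) :
    iteratedDeriv m (fun y => f (k * y)) x = k ^ m • iteratedDeriv m f (k * x) := by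
  induction m generalizing x with
  | zero => simp
  | succ m ih =>
    rw [iteratedDeriv_succ, funext ih, deriv_fun_const_smul_field,
      deriv_comp_mul_left k (iteratedDeriv m f) x, iteratedDeriv_succ, smul_smul, pow_succ]

lemma norm_iteratedDeriv_comp_mul_left_le {E : Type*} [NormedAddCommGroup E] [NormedSpace ℝ E]
    {m : ℕ} {f : ℝ → E} {k x s C : ℝ} (hkx : 0 < k * x)
    (hf : ‖iteratedDeriv m f (k * x)‖ ≤ C * (k * x) ^ (s - m)) :
    ‖iteratedDeriv m (fun y => f (k * y)) x‖ ≤ C * (k * x) ^ s * |x| ^ (-(m : ℝ)) := by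
  have hk : |k| ≠ 0 := abs_ne_zero.2 (left_ne_zero_of_mul hkx.ne')
  have hpow : (k * x) ^ m = |k| ^ m * |x| ^ m := by
    rw [← mul_pow, ← abs_mul, abs_of_pos hkx]
  rw [iteratedDeriv_comp_mul_left, norm_smul, norm_pow, Real.norm_eq_abs]
  calc |k| ^ m * ‖iteratedDeriv m f (k * x)‖ ≤ |k| ^ m * (C * (k * x) ^ (s - m)) := by gcongr
    _ = C * (k * x) ^ s * |x| ^ (-(m : ℝ)) := by
        rw [Real.rpow_sub_natCast hkx.ne', hpow, Real.rpow_neg (abs_nonneg x), Real.rpow_natCast]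
        field_simp

lemma iteratedDeriv_comp_ofReal {U : Set ℂ} (hU : IsOpen U) {f : ℂ → ℂ}
    (hf : DifferentiableOn ℂ f U) (m : ℕ) {x : ℝ} (hx : (x : ℂ) ∈ U) :
    iteratedDeriv m (fun y : ℝ => f y) x = iteratedDeriv m f x := by
  induction m generalizing f with
  | zero => simp only [iteratedDeriv_zero]
  | succ m ih =>
    rw [iteratedDeriv_succ', iteratedDeriv_succ', ← ih (hf.deriv hU)]
    refine Filter.EventuallyEq.iteratedDeriv_eq m ?_
    filter_upwards [Complex.continuous_ofReal.continuousAt.eventually (hU.mem_nhds hx)] with y hy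
    exact (hf.differentiableAt (hU.mem_nhds hy)).hasDerivAt.comp_ofReal.deriv

end Calculus

section HolomorphicIntegral

variable {α E : Type*} [MeasurableSpace α] {μ : Measure α} [NormedAddCommGroup E] [NormedSpace ℂ E]
  {U : Set ℂ} {F : ℂ → α → E}

lemma aestronglyMeasurable_deriv_of_differentiableOn (hU : IsOpen U)
    (hF_meas : ∀ z ∈ U, AEStronglyMeasurable (F z) μ)
    (hF_diff : ∀ᵐ u ∂μ, DifferentiableOn ℂ (F · u) U) {z : ℂ} (hz : z ∈ U) :
    AEStronglyMeasurable (fun u => deriv (F · u) z) μ := by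
  refine aestronglyMeasurable_of_tendsto_ae (𝓝[≠] z)
    (f := U.indicator fun w u => slope (F · u) z w) (fun w => ?_) ?_
  · by_cases hw : w ∈ U
    · rw [indicator_of_mem hw]
      simp only [slope_def_module]
      exact ((hF_meas w hw).sub (hF_meas z hz)).const_smul _
    · rw [indicator_of_notMem hw]
      exact aestronglyMeasurable_zero
  · filter_upwards [hF_diff] with u hu
    refine (hu.differentiableAt (hU.mem_nhds hz)).hasDerivAt.tendsto_slope.congr' ?_
    filter_upwards [mem_nhdsWithin_of_mem_nhds (hU.mem_nhds hz)] with w hw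
    rw [indicator_of_mem hw]

-- Cauchy's estimate on a smaller disc turns the majorant of `F` into one of its derivative.
lemma differentiableOn_integral_of_norm_le (hU : IsOpen U) {bound : α → ℝ}
    (hF_meas : ∀ z ∈ U, AEStronglyMeasurable (F z) μ)
    (hF_diff : ∀ᵐ u ∂μ, DifferentiableOn ℂ (F · u) U)
    (h_bound : ∀ᵐ u ∂μ, ∀ z ∈ U, ‖F z u‖ ≤ bound u) (bound_integrable : Integrable bound μ) :
    DifferentiableOn ℂ (fun z => ∫ u, F z u ∂μ) U := by
  intro z hz
  obtain ⟨ε, ε_pos, hε⟩ := Metric.isOpen_iff.1 hU z hz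
  have closedBall_subset : ∀ w ∈ Metric.ball z (ε / 2), Metric.closedBall w (ε / 2) ⊆ U :=
    fun w hw => (Metric.closedBall_subset_ball' (by linarith [Metric.mem_ball.1 hw])).trans hε
  have deriv_le : ∀ᵐ u ∂μ, ∀ w ∈ Metric.ball z (ε / 2),
      ‖deriv (F · u) w‖ ≤ bound u / (ε / 2) := by
    filter_upwards [hF_diff, h_bound] with u hdiff hbound w hw
    exact Complex.norm_deriv_le_of_forall_mem_sphere_norm_le (half_pos ε_pos)
      ((hdiff.mono (closedBall_subset w hw)).diffContOnCl_ball subset_rfl)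
      fun v hv => hbound v (closedBall_subset w hw (Metric.sphere_subset_closedBall hv))
  have hasDerivAt_integrand : ∀ᵐ u ∂μ, ∀ w ∈ Metric.ball z (ε / 2),
      HasDerivAt (F · u) (deriv (F · u) w) w := by
    filter_upwards [hF_diff] with u hu w hw
    exact (hu.differentiableAt (hU.mem_nhds
      (closedBall_subset w hw (Metric.mem_closedBall_self (half_pos ε_pos).le)))).hasDerivAt
  exact (hasDerivAt_integral_of_dominated_loc_of_deriv_le
    (Metric.ball_mem_nhds z (half_pos ε_pos))
    (by filter_upwards [hU.mem_nhds hz] with w hw using hF_meas w hw)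
    (bound_integrable.mono' (hF_meas z hz) (h_bound.mono fun u hu => hu z hz))
    (aestronglyMeasurable_deriv_of_differentiableOn hU hF_meas hF_diff hz)
    deriv_le (bound_integrable.div_const _) hasDerivAt_integrand).2.differentiableAt
    |>.differentiableWithinAt

end HolomorphicIntegral

/-- The part of the sector `|arg z| < π/4` to the right of the line `Re z = r`: the domain to which
the amplitude of the Hankel function is continued. -/
def truncatedSector (r : ℝ) : Set ℂ := {z | r < z.re ∧ |z.im| < z.re}

namespace truncatedSector

variable {r : ℝ} {z : ℂ}

lemma isOpen (r : ℝ) : IsOpen (truncatedSector r) :=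
  (isOpen_lt continuous_const Complex.continuous_re).inter
    (isOpen_lt Complex.continuous_im.abs Complex.continuous_re)

lemma re_pos (hz : z ∈ truncatedSector r) : 0 < z.re := (abs_nonneg _).trans_lt hz.2

lemma ne_zero (hz : z ∈ truncatedSector r) : z ≠ 0 := Complex.ne_zero_of_re_pos (re_pos hz)

lemma lt_norm (hz : z ∈ truncatedSector r) : r < ‖z‖ := hz.1.trans_le (Complex.re_le_norm z)

lemma closedBall_subset (hr : 0 < r) {t : ℝ} (ht : 2 * r ≤ t) :
    Metric.closedBall (t : ℂ) (t / 4) ⊆ truncatedSector r := by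
  intro w hw
  rw [mem_closedBall_iff_norm] at hw
  have hre := (Complex.abs_re_le_norm (w - t)).trans hw
  have him := (Complex.abs_im_le_norm (w - t)).trans hw
  simp only [Complex.sub_re, Complex.sub_im, Complex.ofReal_re, Complex.ofReal_im, sub_zero]
    at hre him
  have := (abs_le.1 hre).1
  exact ⟨by linarith, by linarith⟩

end truncatedSector

lemma norm_rpow_le_of_mem_closedBall {t : ℝ} (ht : 0 < t) {w : ℂ}
    (hw : w ∈ Metric.closedBall (t : ℂ) (t / 4)) (s : ℝ) : ‖w‖ ^ s ≤ 2 ^ |s| * t ^ s := by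
  have hdist : |‖w‖ - t| ≤ t / 4 := by
    simpa [abs_of_pos ht] using
      (abs_norm_sub_norm_le w (t : ℂ)).trans (mem_closedBall_iff_norm.1 hw)
  obtain ⟨hlower, hupper⟩ := abs_le.1 hdist
  have hw_pos : 0 < ‖w‖ := by linarith
  have hratio : (‖w‖ / t) ^ s ≤ 2 ^ |s| := by
    refine rpow_le_rpow_abs_of_inv_le (by positivity) ?_ ?_ s
    · rw [inv_div, div_le_iff₀ hw_pos]; linarith
    · rw [div_le_iff₀ ht]; linarith
  rwa [Real.div_rpow hw_pos.le ht.le, div_le_iff₀ (by positivity)] at hratio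

theorem exists_norm_iteratedDeriv_ofReal_le {r s A : ℝ} (hr : 0 < r) {f : ℂ → ℂ}
    (hf : DifferentiableOn ℂ f (truncatedSector r))
    (hA : ∀ z ∈ truncatedSector r, ‖f z‖ ≤ A * ‖z‖ ^ s) (m : ℕ) :
    ∃ C > 0, ∀ t : ℝ, 2 * r ≤ t →
      ‖iteratedDeriv m (fun y : ℝ => f y) t‖ ≤ C * t ^ (s - m) := by
  refine ⟨m.factorial * 4 ^ m * (max A 1 * 2 ^ |s|), by positivity, fun t ht => ?_⟩
  have ht_pos : 0 < t := by linarith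
  have hball := truncatedSector.closedBall_subset hr ht
  have hsphere : ∀ w ∈ Metric.sphere (t : ℂ) (t / 4), ‖f w‖ ≤ max A 1 * (2 ^ |s| * t ^ s) := by
    intro w hw
    have hw' := Metric.sphere_subset_closedBall hw
    calc ‖f w‖ ≤ A * ‖w‖ ^ s := hA w (hball hw')
      _ ≤ max A 1 * (2 ^ |s| * t ^ s) := by
        gcongr
        · exact le_max_left A 1
        · exact norm_rpow_le_of_mem_closedBall ht_pos hw' s
  rw [iteratedDeriv_comp_ofReal (truncatedSector.isOpen r) hf m
    (hball (Metric.mem_closedBall_self (by positivity)))]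
  calc ‖iteratedDeriv m f t‖
      ≤ m.factorial * (max A 1 * (2 ^ |s| * t ^ s)) / (t / 4) ^ m :=
        Complex.norm_iteratedDeriv_le_of_forall_mem_sphere_norm_le m (by positivity)
          ((hf.mono hball).diffContOnCl_ball subset_rfl) hsphere
    _ = m.factorial * 4 ^ m * (max A 1 * 2 ^ |s|) * t ^ (s - m) := by
        rw [Real.rpow_sub_natCast ht_pos.ne', div_pow]
        field_simp

/-- The factor `1 + iu/(2z)` of the integrand in Watson's representation of the Hankel function. -/
noncomputable def watsonBase (z : ℂ) (u : ℝ) : ℂ := 1 + Complex.I * u / (2 * z)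

namespace watsonBase

variable {r u : ℝ} {z : ℂ}

lemma half_le_norm (hz : z ∈ truncatedSector r) (u : ℝ) : 1 / 2 ≤ ‖watsonBase z u‖ := by
  have hz0 := truncatedSector.ne_zero hz
  have heq : watsonBase z u = (2 * z + Complex.I * u) / (2 * z) := by
    unfold watsonBase
    field_simp
  have him : z.im ^ 2 ≤ z.re ^ 2 := sq_le_sq.2 (hz.2.le.trans (le_abs_self _))
  have hnorm : ‖z‖ ≤ ‖2 * z + Complex.I * u‖ := by
    rw [← sq_le_sq₀ (norm_nonneg _) (norm_nonneg _), Complex.sq_norm, Complex.sq_norm,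
      Complex.normSq_apply, Complex.normSq_apply]
    simp only [Complex.add_re, Complex.mul_re, Complex.re_ofNat, Complex.im_ofNat, zero_mul,
      sub_zero, Complex.I_re, Complex.ofReal_re, Complex.I_im, Complex.ofReal_im, mul_zero,
      sub_self, add_zero, Complex.add_im, Complex.mul_im, one_mul, zero_add]
    nlinarith [sq_nonneg (2 * z.im + u)]
  rw [heq, norm_div, norm_mul, Complex.norm_two, le_div_iff₀ (by positivity)]
  linarith

lemma norm_le (hr : 0 < r) (hz : z ∈ truncatedSector r) (hu : 0 < u) :
    ‖watsonBase z u‖ ≤ 2 + r⁻¹ * u := by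
  have hz_norm := truncatedSector.lt_norm hz
  calc ‖watsonBase z u‖ ≤ ‖(1 : ℂ)‖ + ‖Complex.I * u / (2 * z)‖ := norm_add_le _ _
    _ = 1 + u / (2 * ‖z‖) := by simp [abs_of_pos hu]
    _ ≤ 1 + u / (1 * r) := by gcongr; norm_num
    _ ≤ 2 + r⁻¹ * u := by rw [one_mul, div_eq_inv_mul]; linarith

lemma mem_slitPlane (hz : z ∈ truncatedSector r) (hu : 0 < u) :
    watsonBase z u ∈ Complex.slitPlane := by
  have hz_re := truncatedSector.re_pos hz
  have hz_normSq := Complex.normSq_pos.2 (truncatedSector.ne_zero hz)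
  have him : (watsonBase z u).im = u / 2 * (z.re / Complex.normSq z) := by
    have heq : watsonBase z u = 1 + ((u / 2 : ℝ) : ℂ) * (Complex.I * z⁻¹) := by
      unfold watsonBase
      push_cast
      ring
    simp [heq]
  exact Or.inr (him ▸ by positivity)

lemma differentiableAt (hz : z ≠ 0) (u : ℝ) : DifferentiableAt ℂ (watsonBase · u) z := by
  unfold watsonBase
  fun_prop (disch := simpa using hz)

lemma norm_cpow_le (hr : 0 < r) (hz : z ∈ truncatedSector r) (hu : 0 < u) (a : ℂ) :
    ‖watsonBase z u ^ a‖ ≤ Real.exp (Real.pi * |a.im|) * (2 + r⁻¹ * u) ^ ⌈|a.re|⌉₊ := by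
  set b := watsonBase z u
  have hb := half_le_norm hz u
  have hmod : ‖b‖ ^ a.re ≤ (2 + r⁻¹ * u) ^ ⌈|a.re|⌉₊ := by
    have htwo : (2 : ℝ) ≤ 2 + r⁻¹ * u := le_add_of_nonneg_right (by positivity)
    have hinv : ‖b‖⁻¹ ≤ 2 + r⁻¹ * u := by
      refine (inv_anti₀ (by norm_num) hb).trans ?_
      rwa [one_div, inv_inv]
    calc ‖b‖ ^ a.re ≤ (2 + r⁻¹ * u) ^ |a.re| :=
          rpow_le_rpow_abs_of_inv_le (by linarith) hinv (norm_le hr hz hu) _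
      _ ≤ (2 + r⁻¹ * u) ^ (⌈|a.re|⌉₊ : ℝ) :=
          Real.rpow_le_rpow_of_exponent_le (by linarith) (Nat.le_ceil _)
      _ = (2 + r⁻¹ * u) ^ ⌈|a.re|⌉₊ := Real.rpow_natCast _ _
  have harg : -(b.arg * a.im) ≤ Real.pi * |a.im| :=
    (neg_le_abs _).trans <| by
      rw [abs_mul]
      gcongr
      exact Complex.abs_arg_le_pi b
  calc ‖b ^ a‖ ≤ ‖b‖ ^ a.re / Real.exp (b.arg * a.im) := Complex.norm_cpow_le b a
    _ = Real.exp (-(b.arg * a.im)) * ‖b‖ ^ a.re := by rw [Real.exp_neg, div_eq_inv_mul]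
    _ ≤ Real.exp (Real.pi * |a.im|) * (2 + r⁻¹ * u) ^ ⌈|a.re|⌉₊ := by gcongr

end watsonBase

/-- The integrand of Watson's representation of the Hankel function of order `a + 1/2`. -/
noncomputable def watsonIntegrand (a z : ℂ) (u : ℝ) : ℂ :=
  Complex.exp (-(u : ℂ)) * (u : ℂ) ^ a * watsonBase z u ^ a

/-- An integrable function of `u` that dominates `watsonIntegrand a z u` for all `z` in
`truncatedSector r`. The exponent `|Re a|` is rounded up so that the power can be expanded into
Gamma integrals. -/
noncomputable def watsonMajorant (a : ℂ) (r u : ℝ) : ℝ :=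
  Real.exp (Real.pi * |a.im|) * (Real.exp (-u) * u ^ a.re * (2 + r⁻¹ * u) ^ ⌈|a.re|⌉₊)

/-- The amplitude `(2/(πz))^{1/2} ∫_0^∞ e^{-u} u^a (1 + iu/(2z))^a du`: up to a constant, the
Hankel function of order `a + 1/2` divided by `e^{iz}`. -/
noncomputable def watsonAmplitude (a z : ℂ) : ℂ :=
  ((2 : ℂ) / ((Real.pi : ℂ) * z)) ^ ((1 : ℂ) / 2) * ∫ u in Ioi (0 : ℝ), watsonIntegrand a z u

section Watson

variable {a z : ℂ} {r u : ℝ}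

lemma integrableOn_watsonMajorant (ha : -1 < a.re) (r : ℝ) :
    IntegrableOn (watsonMajorant a r) (Ioi 0) :=
  (integrableOn_exp_neg_mul_rpow_mul_pow ha 2 r⁻¹ _).const_mul _

lemma norm_watsonIntegrand_le (a : ℂ) (hr : 0 < r) (hz : z ∈ truncatedSector r) (hu : 0 < u) :
    ‖watsonIntegrand a z u‖ ≤ watsonMajorant a r u := by
  have hexp : ‖Complex.exp (-(u : ℂ))‖ = Real.exp (-u) := by simp [Complex.norm_exp]
  rw [watsonIntegrand, norm_mul, norm_mul, hexp, Complex.norm_cpow_eq_rpow_re_of_pos hu]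
  calc Real.exp (-u) * u ^ a.re * ‖watsonBase z u ^ a‖
      ≤ Real.exp (-u) * u ^ a.re *
        (Real.exp (Real.pi * |a.im|) * (2 + r⁻¹ * u) ^ ⌈|a.re|⌉₊) := by
        gcongr
        exact watsonBase.norm_cpow_le hr hz hu a
    _ = watsonMajorant a r u := by unfold watsonMajorant; ring

lemma measurable_watsonIntegrand (a z : ℂ) : Measurable (watsonIntegrand a z) := by
  unfold watsonIntegrand watsonBase
  fun_prop

lemma differentiableOn_watsonIntegrand (a : ℂ) (r : ℝ) (hu : 0 < u) :
    DifferentiableOn ℂ (watsonIntegrand a · u) (truncatedSector r) := fun _ hz =>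
  (((watsonBase.differentiableAt (truncatedSector.ne_zero hz) u).cpow_const
    (watsonBase.mem_slitPlane hz hu)).const_mul _).differentiableWithinAt

lemma differentiableOn_integral_watsonIntegrand (ha : -1 < a.re) (hr : 0 < r) :
    DifferentiableOn ℂ (fun z => ∫ u in Ioi (0 : ℝ), watsonIntegrand a z u)
      (truncatedSector r) := by
  refine differentiableOn_integral_of_norm_le (truncatedSector.isOpen r)
    (fun z _ => (measurable_watsonIntegrand a z).aestronglyMeasurable) ?_ ?_
    (integrableOn_watsonMajorant ha r)
  · filter_upwards [ae_restrict_mem measurableSet_Ioi] with u hu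
    exact differentiableOn_watsonIntegrand a r hu
  · filter_upwards [ae_restrict_mem measurableSet_Ioi] with u hu z hz
    exact norm_watsonIntegrand_le a hr hz hu

lemma norm_integral_watsonIntegrand_le (ha : -1 < a.re) (hr : 0 < r)
    (hz : z ∈ truncatedSector r) :
    ‖∫ u in Ioi (0 : ℝ), watsonIntegrand a z u‖ ≤ ∫ u in Ioi (0 : ℝ), watsonMajorant a r u := by
  refine norm_integral_le_of_norm_le (integrableOn_watsonMajorant ha r) ?_
  filter_upwards [ae_restrict_mem measurableSet_Ioi] with u hu
  exact norm_watsonIntegrand_le a hr hz hu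

lemma two_div_pi_mul_mem_slitPlane (hz : 0 < z.re) :
    (2 : ℂ) / ((Real.pi : ℂ) * z) ∈ Complex.slitPlane := by
  have heq : (2 : ℂ) / ((Real.pi : ℂ) * z) = ((2 / Real.pi : ℝ) : ℂ) * z⁻¹ := by
    push_cast
    rw [div_mul_eq_div_div, div_eq_mul_inv _ z]
  have hz_normSq := Complex.normSq_pos.2 (Complex.ne_zero_of_re_pos hz)
  left
  rw [heq, Complex.re_ofReal_mul, Complex.inv_re]
  positivity

lemma differentiableOn_watsonAmplitude (ha : -1 < a.re) (hr : 0 < r) :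
    DifferentiableOn ℂ (watsonAmplitude a) (truncatedSector r) := by
  refine DifferentiableOn.mul (fun z hz => ?_) (differentiableOn_integral_watsonIntegrand ha hr)
  have hz0 : (Real.pi : ℂ) * z ≠ 0 := mul_ne_zero (by simp) (truncatedSector.ne_zero hz)
  have hquot : DifferentiableAt ℂ (fun w : ℂ => (2 : ℂ) / ((Real.pi : ℂ) * w)) z := by
    fun_prop (disch := exact hz0)
  exact (hquot.cpow_const
    (two_div_pi_mul_mem_slitPlane (truncatedSector.re_pos hz))).differentiableWithinAt

lemma norm_two_div_pi_mul_cpow_half (z : ℂ) :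
    ‖((2 : ℂ) / ((Real.pi : ℂ) * z)) ^ ((1 : ℂ) / 2)‖ =
      (2 / Real.pi) ^ ((1 : ℝ) / 2) * ‖z‖ ^ (-(1 : ℝ) / 2) := by
  have hhalf : (1 : ℂ) / 2 = ((1 / 2 : ℝ) : ℂ) := by push_cast; rfl
  rw [hhalf, Complex.norm_cpow_real, norm_div, norm_mul, Complex.norm_two, Complex.norm_real,
    Real.norm_of_nonneg Real.pi_pos.le, ← div_div, Real.div_rpow (by positivity) (norm_nonneg z),
    neg_div, Real.rpow_neg (norm_nonneg z), ← div_eq_mul_inv]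

lemma exists_norm_watsonAmplitude_le (ha : -1 < a.re) (hr : 0 < r) :
    ∃ A, ∀ z ∈ truncatedSector r, ‖watsonAmplitude a z‖ ≤ A * ‖z‖ ^ (-(1 : ℝ) / 2) := by
  refine ⟨(2 / Real.pi) ^ ((1 : ℝ) / 2) * ∫ u in Ioi (0 : ℝ), watsonMajorant a r u,
    fun z hz => ?_⟩
  rw [watsonAmplitude, norm_mul, norm_two_div_pi_mul_cpow_half, mul_right_comm]
  gcongr
  exact norm_integral_watsonIntegrand_le ha hr hz

end Watson

lemma exp_mul_hankelH1 (n : ℕ) (z : ℝ) :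
    Complex.exp (-Complex.I * z) * hankelH1 n z =
      Complex.exp (-Complex.I * (n * Real.pi / 2 + Real.pi / 4)) / Complex.Gamma (n - 1 / 2) *
        watsonAmplitude (n - 1 / 2) z := by
  have hphase : Complex.exp (-Complex.I * (n * Real.pi / 2 + Real.pi / 4)) =
      Complex.exp (-Complex.I * z) *
        Complex.exp (Complex.I * (z - n * Real.pi / 2 - Real.pi / 4)) := by
    rw [← Complex.exp_add]
    ring_nf
  rw [hphase]
  unfold hankelH1 watsonAmplitude watsonIntegrand watsonBase
  ring

lemma exists_norm_iteratedDeriv_exp_mul_hankelH1_le (m n : ℕ) {δ : ℝ} (hδ : 0 < δ) :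
    ∃ C > 0, ∀ t : ℝ, δ ≤ t →
      ‖iteratedDeriv m (fun y : ℝ => Complex.exp (-Complex.I * y) * hankelH1 n y) t‖ ≤
        C * t ^ (-(1 : ℝ) / 2 - m) := by
  have ha : -1 < ((n : ℂ) - 1 / 2).re := by
    have hre : ((n : ℂ) - 1 / 2).re = n - 1 / 2 := by simp
    rw [hre]
    linarith [(n.cast_nonneg : (0 : ℝ) ≤ n)]
  have hr : 0 < δ / 2 := half_pos hδ
  obtain ⟨A, hA⟩ := exists_norm_watsonAmplitude_le ha hr
  set c := Complex.exp (-Complex.I * (n * Real.pi / 2 + Real.pi / 4)) /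
    Complex.Gamma ((n : ℂ) - 1 / 2)
  have hbound : ∀ z ∈ truncatedSector (δ / 2),
      ‖c * watsonAmplitude (n - 1 / 2) z‖ ≤ ‖c‖ * A * ‖z‖ ^ (-(1 : ℝ) / 2) := by
    intro z hz
    rw [norm_mul, mul_assoc]
    gcongr
    exact hA z hz
  simpa only [exp_mul_hankelH1, mul_div_cancel₀ δ two_ne_zero] using
    exists_norm_iteratedDeriv_ofReal_le hr
      ((differentiableOn_watsonAmplitude ha hr).const_mul c) hbound m

theorem stmt6_general (m n : ℕ) {δ : ℝ} (hδ : 0 < δ) :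
    ∃ C > 0, ∀ k x : ℝ, δ ≤ k * x →
      ‖iteratedDeriv m (fun y : ℝ =>
          Complex.exp (-Complex.I * (k : ℂ) * (y : ℂ)) * hankelH1 n (k * y)) x‖ ≤
        C * (k * x) ^ (-(1:ℝ)/2) * |x| ^ (-(m : ℝ)) := by
  obtain ⟨C, hC_pos, hC⟩ := exists_norm_iteratedDeriv_exp_mul_hankelH1_le m n hδ
  refine ⟨C, hC_pos, fun k x hkx => ?_⟩
  have hscale := norm_iteratedDeriv_comp_mul_left_le (hδ.trans_le hkx) (hC (k * x) hkx)
  simpa only [Complex.ofReal_mul, ← mul_assoc] using hscale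

/-- Away-from-origin smoothness estimate for the non-oscillatory part of the
Hankel kernel: for `kx ≥ 1`,
`|(d/dx)^m [e^{-ikx} H_n^{(1)}(kx)]| ≤ C_{m,n} (kx)^{-1/2} x^{-m}`, uniformly in `k`. -/
theorem stmt6 (m n : ℕ) :
    ∃ C > 0, ∀ k x : ℝ, 0 < k → 1 ≤ k * x →
      ‖iteratedDeriv m (fun y : ℝ =>
          Complex.exp (-Complex.I * (k : ℂ) * (y : ℂ)) * hankelH1 n (k * y)) x‖ ≤
        C * (k * x) ^ (-(1:ℝ)/2) * x ^ (-(m : ℝ)) := by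
  obtain ⟨C, hC_pos, hC⟩ := stmt6_general m n one_pos
  exact ⟨C, hC_pos, fun k x hk hkx => by
    simpa only [abs_of_pos (pos_of_mul_pos_right (one_pos.trans_le hkx) hk.le)] using hC k x hkx⟩
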